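/- Let K be a field, g ≥ 1, let q₁, …, q_g ∈ K be pairwise distinct, p₁, …, p_g ∈ K, let P₂(λ) ∈ K[λ] be any polynomial and H₀, …, H_{g−1} ∈ K. Set ℓ(λ) := −P₂(λ) + Σ_{k=0}^{g−1} H_kλ^{k} − Σ_{j=1}^{g} pⱼ/(λ−qⱼ), β(λ) := Π_{j=1}^{g}(λ−qⱼ), Q(λ) := −Σ_{i=1}^{g} pᵢ·Π_{j≠i}(λ−qⱼ)/(qᵢ−qⱼ), and let L̂(λ) be the 2×2 matrix over K(λ) with entries L̂₁₁ = −Q, L̂₁₂ = β, L̂₂₂ = Q, L̂₂₁ = ∂_λ(Q/β) + ℓ/β − Q²/β. Then det L̂(λ) = −ℓ(λ) + L̂₁₂(λ)·∂_λ(L̂₁₁(λ)/L̂₁₂(λ)), and explicitly: det L̂(λ) = P₂(λ) − Σ_{k=0}^{g−1} H_kλ^{k} + Σ_{j=1}^{g} pⱼ/(λ−qⱼ) − Σ_{i=1}^{g} (pᵢ/(λ−qᵢ))·Π_{k≠i}(λ−q_k)/(qᵢ−q_k), as identities in K(λ). -/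

import Mathlib

/-- The standard derivation `∂_λ` on rational functions, `(p/q)' = (p'q - pq')/q²`. -/
noncomputable def rfDeriv {K : Type*} [Field K] (f : RatFunc K) : RatFunc K :=
  (algebraMap (Polynomial K) (RatFunc K) (Polynomial.derivative f.num)
      * algebraMap (Polynomial K) (RatFunc K) f.denom
    - algebraMap (Polynomial K) (RatFunc K) f.num
      * algebraMap (Polynomial K) (RatFunc K) (Polynomial.derivative f.denom))
  / (algebraMap (Polynomial K) (RatFunc K) f.denom) ^ 2

/-!
For a traceless matrix with diagonal entries `∓Q` and off-diagonal entries `β` and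
`∂(Q/β) + ℓ/β - Q²/β`, the terms `Q²` cancel in the determinant and `-ℓ - β ∂(Q/β)` is left.  Here `-Q` is the Lagrange interpolant of the data
`(qᵢ, pᵢ)` and `β` the nodal polynomial, so the barycentric formula writes `-Q/β` as a combination
`∑ wᵢpᵢ/(λ - qᵢ)` of simple poles with constant coefficients.  Differentiating a simple pole
multiplies it by `-1/(λ - qᵢ)`, and multiplying by `β` restores the Lagrange basis polynomials.
-/

section QuotientRule

open Polynomial

variable {K : Type*} [Field K]

theorem rfDeriv_algebraMap_div_algebraMap (a : K[X]) {b : K[X]} (hb : b ≠ 0) :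
    rfDeriv (algebraMap K[X] (RatFunc K) a / algebraMap K[X] (RatFunc K) b) =
      (algebraMap K[X] (RatFunc K) (derivative a) * algebraMap K[X] (RatFunc K) b -
          algebraMap K[X] (RatFunc K) a * algebraMap K[X] (RatFunc K) (derivative b)) /
        algebraMap K[X] (RatFunc K) b ^ 2 := by
  set f := algebraMap K[X] (RatFunc K) a / algebraMap K[X] (RatFunc K) b
  have cross_mul : a * f.denom = f.num * b := by
    apply RatFunc.algebraMap_injective K
    rw [map_mul, map_mul, ← div_eq_div_iff (RatFunc.algebraMap_ne_zero hb)
      (RatFunc.algebraMap_ne_zero f.denom_ne_zero), f.num_div_denom]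
  have cross_mul_deriv := congrArg derivative cross_mul
  simp only [derivative_mul] at cross_mul_deriv
  rw [rfDeriv, div_eq_div_iff (pow_ne_zero 2 (RatFunc.algebraMap_ne_zero f.denom_ne_zero))
    (pow_ne_zero 2 (RatFunc.algebraMap_ne_zero hb))]
  simp only [← map_mul, ← map_sub, ← map_pow]
  congr 1
  linear_combination (-f.denom * b) * cross_mul_deriv +
    (b * derivative f.denom + f.denom * derivative b) * cross_mul

theorem rfDeriv_C (c : K) : rfDeriv (RatFunc.C c) = 0 := by
  simp [rfDeriv]

theorem rfDeriv_X : rfDeriv (RatFunc.X : RatFunc K) = 1 := by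
  simp [rfDeriv]

theorem rfDeriv_add (f g : RatFunc K) : rfDeriv (f + g) = rfDeriv f + rfDeriv g := by
  induction f using RatFunc.induction_on with | f a b hb
  induction g using RatFunc.induction_on with | f c d hd
  have hb' := RatFunc.algebraMap_ne_zero hb
  have hd' := RatFunc.algebraMap_ne_zero hd
  rw [div_add_div _ _ hb' hd', ← map_mul, ← map_mul, ← map_mul, ← map_add,
    rfDeriv_algebraMap_div_algebraMap _ (mul_ne_zero hb hd),
    rfDeriv_algebraMap_div_algebraMap _ hb, rfDeriv_algebraMap_div_algebraMap _ hd]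
  simp only [derivative_mul, map_add, map_mul]
  field_simp
  ring

theorem rfDeriv_mul (f g : RatFunc K) : rfDeriv (f * g) = f * rfDeriv g + g * rfDeriv f := by
  induction f using RatFunc.induction_on with | f a b hb
  induction g using RatFunc.induction_on with | f c d hd
  have hb' := RatFunc.algebraMap_ne_zero hb
  have hd' := RatFunc.algebraMap_ne_zero hd
  rw [div_mul_div_comm, ← map_mul, ← map_mul,
    rfDeriv_algebraMap_div_algebraMap _ (mul_ne_zero hb hd),
    rfDeriv_algebraMap_div_algebraMap _ hb, rfDeriv_algebraMap_div_algebraMap _ hd]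
  simp only [derivative_mul, map_add, map_mul]
  field_simp
  ring

variable (K) in
/-- The derivation `∂_λ` of the field `K(λ)` over `K`, that is, `rfDeriv` with its linearity and
Leibniz rule bundled. -/
noncomputable def rfDerivation : Derivation K (RatFunc K) (RatFunc K) :=
  .mk'
    { toFun := rfDeriv
      map_add' := rfDeriv_add
      map_smul' := fun c f => by
        rw [RatFunc.smul_eq_C_mul, RatFunc.smul_eq_C_mul, rfDeriv_mul, rfDeriv_C, mul_zero,
          add_zero, RingHom.id_apply] }
    rfDeriv_mul

end QuotientRule

section DifferentialField

open Polynomial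

variable {R F ι : Type*} [CommRing R] [Field F] [Algebra R F] [DecidableEq ι]
  (D : Derivation R F F) {s : Finset ι} {v r : ι → F} {x : F}

/-- The Lax matrix in the geometric gauge over a field with derivation `D`, for `ℓ` the potential of
the quantum curve and `-Q`, `β` the first row of the matrix. -/
def geometricLaxMatrix (ℓ β Q : F) : Matrix (Fin 2) (Fin 2) F :=
  !![-Q, β; D (Q / β) + ℓ / β - Q ^ 2 / β, Q]

theorem det_geometricLaxMatrix (ℓ Q : F) {β : F} (hβ : β ≠ 0) :
    (geometricLaxMatrix D ℓ β Q).det = -ℓ + β * D (-Q / β) := by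
  rw [geometricLaxMatrix, Matrix.det_fin_two_of, neg_div, map_neg]
  field_simp
  ring

theorem derivation_const_div_sub_const {c a : F} (hc : D c = 0) (ha : D a = 0) :
    D (c / (x - a)) = -(c / (x - a) ^ 2) * D x := by
  rw [D.leibniz_div, map_sub, hc, ha]
  simp only [smul_eq_mul, div_eq_mul_inv, inv_pow]
  ring

theorem derivation_nodalWeight_eq_zero {i : ι} (hi : i ∈ s) (hv : ∀ j ∈ s, D (v j) = 0) :
    D (Lagrange.nodalWeight s v i) = 0 :=
  Finset.prod_induction _ (D · = 0)
    (fun a b ha hb => by rw [D.leibniz, ha, hb, smul_zero, smul_zero, add_zero])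
    D.map_one_eq_zero fun j hj => by
      rw [D.leibniz_inv, map_sub, hv i hi, hv j (Finset.mem_of_mem_erase hj), sub_zero, smul_zero]

theorem eval_interpolate_div_eval_nodal (hx : ∀ i ∈ s, x ≠ v i) :
    eval x (Lagrange.interpolate s v r) / eval x (Lagrange.nodal s v) =
      ∑ i ∈ s, Lagrange.nodalWeight s v i * r i / (x - v i) := by
  rw [Lagrange.eval_interpolate_not_at_node r hx,
    mul_div_cancel_left₀ _ (Lagrange.eval_nodal_not_at_node hx)]
  exact Finset.sum_congr rfl fun i _ => by ring

theorem eval_nodal_mul_derivation_interpolate_div_nodal (hx : ∀ i ∈ s, x ≠ v i)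
    (hv : ∀ i ∈ s, D (v i) = 0) (hr : ∀ i ∈ s, D (r i) = 0) :
    eval x (Lagrange.nodal s v) *
        D (eval x (Lagrange.interpolate s v r) / eval x (Lagrange.nodal s v)) =
      -(∑ i ∈ s, r i / (x - v i) * eval x (Lagrange.basis s v i)) * D x := by
  rw [eval_interpolate_div_eval_nodal hx, map_sum, Finset.mul_sum, ← Finset.sum_neg_distrib,
    Finset.sum_mul]
  refine Finset.sum_congr rfl fun i hi => ?_
  have residue_const : D (Lagrange.nodalWeight s v i * r i) = 0 := by
    rw [D.leibniz, hr i hi, derivation_nodalWeight_eq_zero D hi hv, smul_zero, smul_zero, add_zero]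
  rw [derivation_const_div_sub_const D residue_const (hv i hi),
    Lagrange.eval_basis_not_at_node hi (hx i hi)]
  field_simp [sub_ne_zero.mpr (hx i hi)]

theorem eval_basis_eq_prod_div (i : ι) :
    eval x (Lagrange.basis s v i) = ∏ j ∈ s.erase i, (x - v j) / (v i - v j) := by
  simp only [Lagrange.basis, Lagrange.basisDivisor, eval_prod, eval_mul, eval_C, eval_sub, eval_X,
    div_eq_inv_mul]

theorem eval_interpolate_eq_sum_prod_div :
    eval x (Lagrange.interpolate s v r) =
      ∑ i ∈ s, r i * ∏ j ∈ s.erase i, (x - v j) / (v i - v j) := by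
  simp only [Lagrange.interpolate_apply, eval_finsetSum, eval_mul, eval_C, eval_basis_eq_prod_div]

end DifferentialField

theorem determinant_geometric_lax_matrix_general
    {R F ι : Type*} [CommRing R] [Field F] [Algebra R F] [DecidableEq ι]
    (D : Derivation R F F) {x : F} (hx : D x = 1) {s : Finset ι} {q p : ι → F}
    (hq_inj : Set.InjOn q s) (hq : ∀ i ∈ s, D (q i) = 0) (hp : ∀ i ∈ s, D (p i) = 0) (ℓ : F) :
    let β : F := ∏ j ∈ s, (x - q j)
    let Q : F := -∑ i ∈ s, p i * ∏ j ∈ s.erase i, (x - q j) / (q i - q j)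
    let L := geometricLaxMatrix D ℓ β Q
    L.det = -ℓ + L 0 1 * D (L 0 0 / L 0 1) ∧
      L.det = -ℓ - ∑ i ∈ s, p i / (x - q i) * ∏ j ∈ s.erase i, (x - q j) / (q i - q j) := by
  intro β Q L
  have x_ne_node (i) (hi : i ∈ s) : x ≠ q i := by
    rintro rfl
    exact one_ne_zero (hx.symm.trans (hq i hi))
  have hβ : β ≠ 0 := Finset.prod_ne_zero_iff.mpr fun i hi => sub_ne_zero.mpr (x_ne_node i hi)
  have det_eq : L.det = -ℓ + β * D (-Q / β) := det_geometricLaxMatrix D ℓ Q hβ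
  refine ⟨det_eq, det_eq.trans ?_⟩
  have key := eval_nodal_mul_derivation_interpolate_div_nodal D x_ne_node hq hp
  simp only [Lagrange.eval_nodal, eval_interpolate_eq_sum_prod_div, eval_basis_eq_prod_div, hx,
    mul_one] at key
  rw [neg_neg, key, sub_eq_add_neg]

/-- **Determinant of the geometric Lax matrix (equations `Equivalence` and
`ExpressionDethatL`).**  With `ℓ(λ) = -P₂(λ) + Σ_k H_k λ^k - Σⱼ pⱼ/(λ-qⱼ)`,
`β(λ) = Π(λ-qⱼ)` and `Q` the Lagrange polynomial, the matrix
`L̂ = !![-Q, β; ∂_λ(Q/β) + ℓ/β - Q²/β, Q]` satisfies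
`det L̂ = -ℓ + L̂₁₂ ∂_λ(L̂₁₁/L̂₁₂)` and explicitly
`det L̂ = P₂ - Σ_k H_k λ^k + Σⱼ pⱼ/(λ-qⱼ) - Σᵢ (pᵢ/(λ-qᵢ)) Π_{k≠i}(λ-q_k)/(qᵢ-q_k)`. -/
theorem determinant_geometric_lax_matrix
    (K : Type*) [Field K] (g : ℕ) (hg : 1 ≤ g)
    (q : Fin g → K) (hq : Function.Injective q)
    (p : Fin g → K) (P2 : Polynomial K) (H : ℕ → K) :
    let ℓ : RatFunc K :=
      (-(algebraMap (Polynomial K) (RatFunc K) P2)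
        + ∑ k ∈ Finset.range g, RatFunc.C (H k) * RatFunc.X ^ k
        - ∑ j : Fin g, RatFunc.C (p j) / (RatFunc.X - RatFunc.C (q j)))
    let β : RatFunc K := ∏ j : Fin g, (RatFunc.X - RatFunc.C (q j))
    let Q : RatFunc K :=
      (-∑ i : Fin g, RatFunc.C (p i) * ∏ j ∈ Finset.univ.erase i,
        (RatFunc.X - RatFunc.C (q j)) / (RatFunc.C (q i) - RatFunc.C (q j)))
    let Lhat : Matrix (Fin 2) (Fin 2) (RatFunc K) :=
      !![-Q, β; rfDeriv (Q / β) + ℓ / β - Q ^ 2 / β, Q]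
    Lhat.det = -ℓ + Lhat 0 1 * rfDeriv (Lhat 0 0 / Lhat 0 1)
      ∧ Lhat.det = algebraMap (Polynomial K) (RatFunc K) P2
          - ∑ k ∈ Finset.range g, RatFunc.C (H k) * RatFunc.X ^ k
          + ∑ j : Fin g, RatFunc.C (p j) / (RatFunc.X - RatFunc.C (q j))
          - ∑ i : Fin g, (RatFunc.C (p i) / (RatFunc.X - RatFunc.C (q i)))
              * ∏ m ∈ Finset.univ.erase i,
                  (RatFunc.X - RatFunc.C (q m)) / (RatFunc.C (q i) - RatFunc.C (q m)) := by
  intro ℓ β Q Lhat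
  have nodes_inj : Set.InjOn (fun i => RatFunc.C (q i)) (Finset.univ : Finset (Fin g)) :=
    (RatFunc.C_injective.comp hq).injOn
  obtain ⟨det_eq, det_eq_sum⟩ := determinant_geometric_lax_matrix_general (rfDerivation K)
    rfDeriv_X nodes_inj (fun i _ => rfDeriv_C (q i)) (fun i _ => rfDeriv_C (p i)) ℓ
  exact ⟨det_eq, det_eq_sum.trans (by ring)⟩
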